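/- Let n ≥ 3 and define K(x', s) = ∫_{ℝ^{n-1}} e^{-|x' - z'|^2/(4s)} / |z'|^{n-2} dz' for x' ∈ ℝ^{n-1} \ {0} and s > 0. Then for every m ≥ 2, K(x', s) ≥ (m/((m+1)|x'|))^{n-2} s^{(n-1)/2} (4π)^{(n-1)/2} (1 - 2^{(n-1)/4} e^{-|x'|^2/(8 m^2 s)}). -/

import Mathlib

open Real MeasureTheory

/-!
Write `d = n - 1` and `α = n - 2`. Normalised, the Gaussian weight `z ↦ exp (-‖x - z‖² / (4 * s))`
is a probability density with second moment `‖x‖² + 2 * d * s`, so Jensen's inequality for the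
convex `y ↦ y ^ (-α / 2)` gives `K(x, s) ≥ (‖x‖² + 2 * d * s) ^ (-α / 2) * (4 * π * s) ^ (d / 2)`.
Where the claimed bound is positive, `2 * d * s < ‖x‖² / (m² * log 2) ≤ (2 * m + 1) * ‖x‖² / m²`,
hence `‖x‖² + 2 * d * s ≤ ((m + 1) * ‖x‖ / m)²`, and the Jensen bound dominates the claimed one even
without its last factor.

Restricting the integral to the ball `‖z - x‖ ≤ ‖x‖ / m` would need a Gaussian tail bound with
constant `2 ^ (d / 4)`, which is false for large `d`: at radius `r` with `r² = 4 * d * s` it would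
bound the relative tail mass by `2 ^ (d / 4) * exp (-d / 2)`, but that mass is
`exp (-(1 - log 2 + o(1)) * d / 2)`.
-/

open Module Set

theorem sq_rpow_neg_half {y α : ℝ} (hy : 0 ≤ y) : (y ^ 2) ^ (-α / 2) = y ^ (-α) := by
  rw [← rpow_natCast_mul hy, Nat.cast_two, mul_div_cancel₀ _ two_ne_zero]

theorem one_add_mul_sub_one_le_rpow {p y : ℝ} (hp : p ≤ 0) (hy : 0 < y) :
    1 + p * (y - 1) ≤ y ^ p := by
  calc 1 + p * (y - 1) ≤ 1 + p * log y :=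
        add_le_add_right (mul_le_mul_of_nonpos_left (log_le_sub_one_of_pos hy) hp) 1
    _ ≤ exp (log y * p) := by linarith [add_one_le_exp (log y * p)]
    _ = y ^ p := (rpow_def_of_pos hy p).symm

theorem rpow_mul_integral_le_integral_rpow_mul {Ω : Type*} [MeasurableSpace Ω] {μ : Measure Ω}
    {f w : Ω → ℝ} {c p : ℝ} (hp : p ≤ 0) (hc : 0 < c) (hf : ∀ᵐ ω ∂μ, 0 < f ω)
    (hw : ∀ᵐ ω ∂μ, 0 ≤ w ω) (hw_int : Integrable w μ) (hfw_int : Integrable (fun ω ↦ f ω * w ω) μ)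
    (hpw_int : Integrable (fun ω ↦ f ω ^ p * w ω) μ)
    (hmean : ∫ ω, f ω * w ω ∂μ = c * ∫ ω, w ω ∂μ) :
    c ^ p * ∫ ω, w ω ∂μ ≤ ∫ ω, f ω ^ p * w ω ∂μ := by
  have tangent : ∀ᵐ ω ∂μ,
      c ^ p * (1 - p) * w ω + c ^ p * (p / c) * (f ω * w ω) ≤ f ω ^ p * w ω := by
    filter_upwards [hf, hw] with ω hfω hwω
    calc c ^ p * (1 - p) * w ω + c ^ p * (p / c) * (f ω * w ω)
        = c ^ p * (1 + p * (f ω / c - 1)) * w ω := by ring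
      _ ≤ c ^ p * (f ω / c) ^ p * w ω := by
        gcongr
        exact one_add_mul_sub_one_le_rpow hp (div_pos hfω hc)
      _ = f ω ^ p * w ω := by
        rw [← mul_rpow hc.le (div_pos hfω hc).le, mul_div_cancel₀ _ hc.ne']
  calc c ^ p * ∫ ω, w ω ∂μ
      = c ^ p * (1 - p) * ∫ ω, w ω ∂μ + c ^ p * (p / c) * ∫ ω, f ω * w ω ∂μ := by
        rw [hmean]; field_simp; ring
    _ = ∫ ω, (c ^ p * (1 - p) * w ω + c ^ p * (p / c) * (f ω * w ω)) ∂μ := by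
        rw [integral_add (hw_int.const_mul _) (hfw_int.const_mul _), integral_const_mul,
          integral_const_mul]
    _ ≤ ∫ ω, f ω ^ p * w ω ∂μ :=
        integral_mono_ae ((hw_int.const_mul _).add (hfw_int.const_mul _)) hpw_int tangent

section Gaussian

variable {V : Type*} [NormedAddCommGroup V] [InnerProductSpace ℝ V] [FiniteDimensional ℝ V]
  [MeasurableSpace V] [BorelSpace V] {b : ℝ}

section Nontrivial

variable [Nontrivial V]

theorem integrable_norm_rpow_mul_exp_neg_mul_sq_norm (hb : 0 < b) {q : ℝ}
    (hq : -(finrank ℝ V : ℝ) < q) :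
    Integrable fun v : V ↦ ‖v‖ ^ q * exp (-b * ‖v‖ ^ 2) := by
  rw [integrable_fun_norm_addHaar volume (f := fun r ↦ r ^ q * exp (-b * r ^ 2))]
  have hd : ((finrank ℝ V - 1 : ℕ) : ℝ) = finrank ℝ V - 1 := Nat.cast_pred finrank_pos
  refine (integrableOn_rpow_mul_exp_neg_mul_sq hb
    (s := (finrank ℝ V - 1 : ℕ) + q) (by linarith)).congr_fun (fun r (hr : 0 < r) ↦ ?_)
    measurableSet_Ioi
  simp only [smul_eq_mul, rpow_add hr, rpow_natCast, mul_assoc]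

theorem integrable_norm_rpow_mul_exp_neg_mul_sq_norm_sub (hb : 0 < b) {q : ℝ}
    (hq : -(finrank ℝ V : ℝ) < q) (x : V) :
    Integrable fun z : V ↦ ‖z‖ ^ q * exp (-b * ‖x - z‖ ^ 2) := by
  refine ((integrable_norm_rpow_mul_exp_neg_mul_sq_norm (half_pos hb) hq).const_mul
    (exp (b * ‖x‖ ^ 2))).mono' (by fun_prop) (ae_of_all _ fun z ↦ ?_)
  have hz : ‖z‖ ^ 2 ≤ 2 * (‖x‖ ^ 2 + ‖x - z‖ ^ 2) := by
    have h := parallelogram_law_with_norm ℝ x (x - z)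
    rw [sub_sub_cancel] at h
    linarith [sq_nonneg ‖x + (x - z)‖]
  have hexp : exp (-b * ‖x - z‖ ^ 2) ≤ exp (b * ‖x‖ ^ 2) * exp (-(b / 2) * ‖z‖ ^ 2) := by
    rw [← exp_add, exp_le_exp]
    nlinarith
  calc ‖‖z‖ ^ q * exp (-b * ‖x - z‖ ^ 2)‖ = ‖z‖ ^ q * exp (-b * ‖x - z‖ ^ 2) :=
        norm_of_nonneg (by positivity)
    _ ≤ ‖z‖ ^ q * (exp (b * ‖x‖ ^ 2) * exp (-(b / 2) * ‖z‖ ^ 2)) := by gcongr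
    _ = exp (b * ‖x‖ ^ 2) * (‖z‖ ^ q * exp (-(b / 2) * ‖z‖ ^ 2)) := mul_left_comm _ _ _

theorem integrable_sq_norm_mul_exp_neg_mul_sq_norm_sub (hb : 0 < b) (x : V) :
    Integrable fun z : V ↦ ‖z‖ ^ 2 * exp (-b * ‖x - z‖ ^ 2) := by
  simpa only [rpow_two] using integrable_norm_rpow_mul_exp_neg_mul_sq_norm_sub hb (q := 2)
    (by linarith [(finrank ℝ V).cast_nonneg (α := ℝ)]) x

theorem integrable_exp_neg_mul_sq_norm_sub (hb : 0 < b) (x : V) :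
    Integrable fun z : V ↦ exp (-b * ‖x - z‖ ^ 2) := by
  simpa only [rpow_zero, one_mul] using integrable_norm_rpow_mul_exp_neg_mul_sq_norm_sub hb (q := 0)
    (neg_lt_zero.2 (Nat.cast_pos.2 finrank_pos)) x

theorem integral_norm_rpow_mul_exp_neg_mul_sq_norm (hb : 0 < b) {q : ℝ}
    (hq : -(finrank ℝ V : ℝ) < q) :
    ∫ v : V, ‖v‖ ^ q * exp (-b * ‖v‖ ^ 2) =
      finrank ℝ V * volume.real (Metric.ball (0 : V) 1) *
        (b ^ (-(finrank ℝ V + q) / 2) * (1 / 2) * Gamma ((finrank ℝ V + q) / 2)) := by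
  have hd : ((finrank ℝ V - 1 : ℕ) : ℝ) = finrank ℝ V - 1 := Nat.cast_pred finrank_pos
  have hradial : ∫ r in Ioi (0 : ℝ), r ^ (finrank ℝ V - 1) • (r ^ q * exp (-b * r ^ 2)) =
      ∫ r in Ioi (0 : ℝ), r ^ (finrank ℝ V - 1 + q) * exp (-b * r ^ (2 : ℝ)) := by
    refine setIntegral_congr_fun measurableSet_Ioi fun r (hr : 0 < r) ↦ ?_
    simp only [smul_eq_mul, ← hd, rpow_add hr, rpow_natCast, rpow_two, mul_assoc]
  rw [integral_fun_norm_addHaar volume (fun r ↦ r ^ q * exp (-b * r ^ 2)), hradial,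
    integral_rpow_mul_exp_neg_mul_rpow two_pos (by linarith) hb, nsmul_eq_mul, smul_eq_mul,
    ← mul_assoc, show (finrank ℝ V : ℝ) - 1 + q + 1 = finrank ℝ V + q by ring]

theorem integral_sq_norm_mul_exp_neg_mul_sq_norm (hb : 0 < b) :
    ∫ v : V, ‖v‖ ^ 2 * exp (-b * ‖v‖ ^ 2) =
      finrank ℝ V / (2 * b) * ∫ v : V, exp (-b * ‖v‖ ^ 2) := by
  have hd : (0 : ℝ) < finrank ℝ V := Nat.cast_pos.2 finrank_pos
  have h0 := integral_norm_rpow_mul_exp_neg_mul_sq_norm (V := V) hb (q := 0) (by linarith)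
  have h2 := integral_norm_rpow_mul_exp_neg_mul_sq_norm (V := V) hb (q := 2) (by linarith)
  simp only [rpow_zero, one_mul, add_zero] at h0
  simp only [rpow_two] at h2
  have hpow : b ^ (-((finrank ℝ V : ℝ) + 2) / 2) = b ^ (-(finrank ℝ V : ℝ) / 2) / b := by
    rw [← rpow_sub_one hb.ne']
    congr 1
    ring
  have hGamma : Gamma (((finrank ℝ V : ℝ) + 2) / 2) =
      finrank ℝ V / 2 * Gamma (finrank ℝ V / 2) := by
    rw [← Gamma_add_one (by positivity)]
    congr 1
    ring
  rw [h2, h0, hpow, hGamma]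
  field_simp

theorem integral_sq_norm_mul_exp_neg_mul_sq_norm_sub (hb : 0 < b) (x : V) :
    ∫ z : V, ‖z‖ ^ 2 * exp (-b * ‖x - z‖ ^ 2) =
      (‖x‖ ^ 2 + finrank ℝ V / (2 * b)) * ∫ z : V, exp (-b * ‖x - z‖ ^ 2) := by
  -- Averaging over `v ↦ -v` removes the cross term of `‖x - v‖ ^ 2`.
  set g : V → ℝ := fun v ↦ exp (-b * ‖v‖ ^ 2)
  have hg : Integrable g := by
    simpa only [zero_sub, norm_neg] using integrable_exp_neg_mul_sq_norm_sub hb (0 : V)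
  have hvg : Integrable fun v : V ↦ ‖v‖ ^ 2 * g v := by
    simpa only [zero_sub, norm_neg] using integrable_sq_norm_mul_exp_neg_mul_sq_norm_sub hb (0 : V)
  have hsub : ∫ z, ‖z‖ ^ 2 * g (x - z) = ∫ v, ‖x - v‖ ^ 2 * g v := by
    rw [← integral_sub_left_eq_self (fun v ↦ ‖x - v‖ ^ 2 * g v) volume x]
    simp only [sub_sub_cancel]
  have hadd : ∫ v, ‖x + v‖ ^ 2 * g v = ∫ v, ‖x - v‖ ^ 2 * g v := by
    rw [← integral_neg_eq_self]
    simp only [g, norm_neg, sub_eq_add_neg]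
  have hsub_int : Integrable fun v ↦ ‖x - v‖ ^ 2 * g v := by
    simpa only [sub_sub_cancel] using
      (integrable_sq_norm_mul_exp_neg_mul_sq_norm_sub hb x).comp_sub_left x
  have hadd_int : Integrable fun v ↦ ‖x + v‖ ^ 2 * g v := by
    simpa only [g, norm_neg, sub_neg_eq_add] using hsub_int.comp_neg
  have hsum : (∫ v, ‖x + v‖ ^ 2 * g v) + ∫ v, ‖x - v‖ ^ 2 * g v =
      2 * (‖x‖ ^ 2 * (∫ v, g v) + ∫ v, ‖v‖ ^ 2 * g v) := by
    rw [← integral_add hadd_int hsub_int, ← integral_const_mul, ← integral_add (hg.const_mul _) hvg,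
      ← integral_const_mul]
    simp only [← add_mul, parallelogram_law_with_norm ℝ, mul_assoc]
  have hmoment := integral_sq_norm_mul_exp_neg_mul_sq_norm (V := V) hb
  rw [integral_sub_left_eq_self g volume x, add_mul, ← hmoment, hsub]
  linarith

end Nontrivial

theorem rpow_mul_rpow_le_integral_norm_rpow_mul_exp (hb : 0 < b) {α : ℝ} (hα : 0 ≤ α)
    (hαd : α < finrank ℝ V) (x : V) :
    (‖x‖ ^ 2 + finrank ℝ V / (2 * b)) ^ (-α / 2) * (π / b) ^ (finrank ℝ V / 2 : ℝ) ≤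
      ∫ z : V, ‖z‖ ^ (-α) * exp (-b * ‖x - z‖ ^ 2) := by
  have hd : (0 : ℝ) < finrank ℝ V := hα.trans_lt hαd
  have : Nontrivial V := nontrivial_of_finrank_pos (R := ℝ) (Nat.cast_pos.1 hd)
  have hpow (z : V) : (‖z‖ ^ 2) ^ (-α / 2) = ‖z‖ ^ (-α) := sq_rpow_neg_half (norm_nonneg z)
  rw [← GaussianFourier.integral_rexp_neg_mul_sq_norm hb,
    ← integral_sub_left_eq_self (fun v : V ↦ exp (-b * ‖v‖ ^ 2)) volume x]
  simp only [← hpow]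
  refine rpow_mul_integral_le_integral_rpow_mul (by linarith) (by positivity) ?_
    (ae_of_all _ fun z ↦ (exp_pos _).le) (integrable_exp_neg_mul_sq_norm_sub hb x)
    (integrable_sq_norm_mul_exp_neg_mul_sq_norm_sub hb x) ?_
    (integral_sq_norm_mul_exp_neg_mul_sq_norm_sub hb x)
  · filter_upwards [Measure.ae_ne volume (0 : V)] with z hz
    exact pow_pos (norm_pos_iff.2 hz) 2
  · simpa only [hpow] using
      integrable_norm_rpow_mul_exp_neg_mul_sq_norm_sub hb (neg_lt_neg hαd) x

theorem rpow_mul_rpow_le_integral_exp_div_norm_rpow {s α : ℝ} (hs : 0 < s) (hα : 0 ≤ α)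
    (hαd : α < finrank ℝ V) (x : V) :
    (‖x‖ ^ 2 + 2 * finrank ℝ V * s) ^ (-α / 2) * (4 * π * s) ^ (finrank ℝ V / 2 : ℝ) ≤
      ∫ z : V, exp (-‖x - z‖ ^ 2 / (4 * s)) / ‖z‖ ^ α := by
  have hb : 0 < 1 / (4 * s) := by positivity
  have hmoment : 2 * (finrank ℝ V : ℝ) * s = finrank ℝ V / (2 * (1 / (4 * s))) := by
    field_simp
    ring
  have hmass : 4 * π * s = π / (1 / (4 * s)) := by field_simp
  have hweight (z : V) : exp (-‖x - z‖ ^ 2 / (4 * s)) / ‖z‖ ^ α =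
      ‖z‖ ^ (-α) * exp (-(1 / (4 * s)) * ‖x - z‖ ^ 2) := by
    rw [rpow_neg (norm_nonneg z), div_eq_inv_mul]
    congr 2
    ring
  simpa only [hmoment, hmass, hweight] using rpow_mul_rpow_le_integral_norm_rpow_mul_exp hb hα hαd x

end Gaussian

theorem mul_log_two_lt_of_two_rpow_mul_exp_lt_one {d m r s : ℝ} (hm : m ≠ 0) (hs : 0 < s)
    (h : 2 ^ (d / 4) * exp (-r ^ 2 / (8 * m ^ 2 * s)) < 1) :
    2 * d * s * (m ^ 2 * log 2) < r ^ 2 := by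
  rw [rpow_def_of_pos two_pos, ← exp_add, exp_lt_one_iff, neg_div, ← sub_eq_add_neg, sub_neg,
    lt_div_iff₀ (by positivity)] at h
  linarith

theorem sq_add_le_sq_of_mul_log_two_le {m r t : ℝ} (hm : m ≠ 0) (hm_log : 1 ≤ (2 * m + 1) * log 2)
    (ht : t * (m ^ 2 * log 2) ≤ r ^ 2) :
    r ^ 2 + t ≤ ((m + 1) * r / m) ^ 2 := by
  calc r ^ 2 + t ≤ r ^ 2 + (2 * m + 1) * log 2 * r ^ 2 / (m ^ 2 * log 2) := by
        gcongr
        rw [le_div_iff₀ (by positivity)]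
        exact ht.trans (le_mul_of_one_le_left (sq_nonneg r) hm_log)
    _ = ((m + 1) * r / m) ^ 2 := by field_simp; ring

theorem stmt19_general {V : Type*} [NormedAddCommGroup V] [InnerProductSpace ℝ V]
    [FiniteDimensional ℝ V] [MeasurableSpace V] [BorelSpace V] {α m s : ℝ} {x : V} (hα : 0 ≤ α)
    (hαd : α < finrank ℝ V) (hm : 1 ≤ (2 * m + 1) * log 2) (hx : x ≠ 0) (hs : 0 < s) :
    (m / ((m + 1) * ‖x‖)) ^ α * s ^ (finrank ℝ V / 2 : ℝ) * (4 * π) ^ (finrank ℝ V / 2 : ℝ) *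
        (1 - 2 ^ (finrank ℝ V / 4 : ℝ) * exp (-‖x‖ ^ 2 / (8 * m ^ 2 * s))) ≤
      ∫ z : V, exp (-‖x - z‖ ^ 2 / (4 * s)) / ‖z‖ ^ α := by
  have hm_pos : 0 < m := by nlinarith [log_two_gt_d9, log_two_lt_d9]
  set d : ℝ := (finrank ℝ V : ℝ)
  set q := 2 ^ (d / 4) * exp (-‖x‖ ^ 2 / (8 * m ^ 2 * s))
  rcases lt_or_ge q 1 with hq | hq
  · have hmoment : ‖x‖ ^ 2 + 2 * d * s ≤ ((m + 1) * ‖x‖ / m) ^ 2 :=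
      sq_add_le_sq_of_mul_log_two_le hm_pos.ne' hm
        (mul_log_two_lt_of_two_rpow_mul_exp_lt_one hm_pos.ne' hs hq).le
    calc _ ≤ (m / ((m + 1) * ‖x‖)) ^ α * s ^ (d / 2) * (4 * π) ^ (d / 2) :=
          mul_le_of_le_one_right (by positivity) (sub_le_self 1 (by positivity))
      _ = (((m + 1) * ‖x‖ / m) ^ 2) ^ (-α / 2) * (4 * π * s) ^ (d / 2) := by
          rw [sq_rpow_neg_half (by positivity), rpow_neg (by positivity),
            ← inv_rpow (by positivity), inv_div, mul_assoc, ← mul_rpow hs.le (by positivity),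
            mul_comm s]
      _ ≤ (‖x‖ ^ 2 + 2 * d * s) ^ (-α / 2) * (4 * π * s) ^ (d / 2) := by
          gcongr ?_ * _
          exact rpow_le_rpow_of_nonpos (by positivity) hmoment (by linarith)
      _ ≤ _ := rpow_mul_rpow_le_integral_exp_div_norm_rpow hs hα hαd x
  · calc _ ≤ (0 : ℝ) := mul_nonpos_of_nonneg_of_nonpos (by positivity) (sub_nonpos.2 hq)
      _ ≤ _ := integral_nonneg fun z ↦ by positivity

theorem stmt19 (n : ℕ) (hn : 3 ≤ n)
    (K : EuclideanSpace ℝ (Fin (n - 1)) → ℝ → ℝ)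
    (hK : ∀ x' s, K x' s =
      ∫ z' : EuclideanSpace ℝ (Fin (n - 1)),
        Real.exp (-‖x' - z'‖ ^ 2 / (4 * s)) / ‖z'‖ ^ (n - 2))
    (m : ℝ) (hm : 2 ≤ m)
    (x' : EuclideanSpace ℝ (Fin (n - 1))) (s : ℝ) (hx : x' ≠ 0) (hs : 0 < s) :
    K x' s ≥ (m / ((m + 1) * ‖x'‖)) ^ (n - 2) * s ^ (((n : ℝ) - 1) / 2) *
        (4 * Real.pi) ^ (((n : ℝ) - 1) / 2) *
        (1 - 2 ^ (((n : ℝ) - 1) / 4) * Real.exp (-‖x'‖ ^ 2 / (8 * m ^ 2 * s))) := by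
  have hd : (finrank ℝ (EuclideanSpace ℝ (Fin (n - 1))) : ℝ) = n - 1 := by
    rw [finrank_euclideanSpace_fin, Nat.cast_pred (by lia)]
  have hα : ((n - 2 : ℕ) : ℝ) = n - 2 := Nat.cast_sub (by lia)
  have h := stmt19_general (α := (n - 2 : ℕ)) (Nat.cast_nonneg _) (by linarith)
    (show 1 ≤ (2 * m + 1) * log 2 by nlinarith [log_two_gt_d9]) hx hs
  simpa only [hK, hd, rpow_natCast] using h
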